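/- Permutation averaging lemma: for any diagonal psd matrix Λ ∈ ℝ^{N×N} (with positive trace) and any random permutation matrix P (a random variable taking finitely many permutation-matrix values), tr(Φ_b^(t)(Λ)) ≤ tr(Φ_b^(t)(E[PΛP*])). -/

import Mathlib

/-!
On diagonal matrices `PhiB b` acts on the vector `x` of diagonal entries by
`x i ↦ φ^[b] (x i)` with `φ u = u - u² / s` and `s = ∑ j, x j`. The two-variable function
`(s, u) ↦ u - u² / s` is superadditive (`step_superadd`, the Cauchy–Schwarz inequality in Engel
form), and `u ↦ u - u² / s` is increasing up to `s / 2`, which bounds its values on `[0, s]`;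
so all its iterates are superadditive in `(s, u)` too (`iter_superadd`). Hence the vector map
`diagPhi b` is superadditive on the nonnegative orthant, coordinate by coordinate. As it preserves
the orthant, it is therefore monotone there, and so its iterates are superadditive as well
(`diagPhi_iterate_superadd`).

Since `diagPhi b` is also positively homogeneous and commutes with permutations of the coordinates,
`(diagPhi b)^[t] (∑ i, w i • x ∘ σ i) ≥ ∑ i, w i • ((diagPhi b)^[t] x) ∘ σ i` coordinatewise.
Summing the coordinates and using `∑ i, w i = 1` gives the claim.
-/


noncomputable def PhiB {N : ℕ} (b : ℕ) (M : Matrix (Fin N) (Fin N) ℝ) :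
    Matrix (Fin N) (Fin N) ℝ :=
  (fun X : Matrix (Fin N) (Fin N) ℝ => X - (Matrix.trace M)⁻¹ • X ^ 2)^[b] M

/-- The scalar map `φ_s(u) = u - u² / s`; for `s = 0` it is the identity, as `0⁻¹ = 0`. -/
noncomputable def phiStep (s u : ℝ) : ℝ := u - s⁻¹ * u ^ 2

/-- The action of `PhiB b` on the vector of diagonal entries of a diagonal matrix. -/
noncomputable def diagPhi {N : ℕ} (b : ℕ) (x : Fin N → ℝ) : Fin N → ℝ :=
  fun i => (phiStep (∑ j, x j))^[b] (x i)

lemma step_nonneg {s u : ℝ} (h0 : 0 ≤ u) (h1 : u ≤ s) : 0 ≤ phiStep s u := by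
  unfold phiStep
  rcases (h0.trans h1).eq_or_lt with h | h
  · subst h; simpa using h0
  · have : s⁻¹ * u ^ 2 ≤ u := by
      rw [inv_mul_le_iff₀ h]; nlinarith
    linarith

lemma step_le_half {s u : ℝ} (h0 : 0 ≤ u) (h1 : u ≤ s) : phiStep s u ≤ s / 2 := by
  unfold phiStep
  rcases (h0.trans h1).eq_or_lt with h | h
  · subst h; simpa using h1
  · have e : u - s⁻¹ * u ^ 2 = (u * s - u ^ 2) / s := by field_simp
    rw [e, div_le_iff₀ h]
    nlinarith [sq_nonneg (s - 2 * u)]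

lemma step_mono {s u v : ℝ} (hs : 0 ≤ s) (huv : u ≤ v) (hv : v ≤ s / 2) :
    phiStep s u ≤ phiStep s v := by
  unfold phiStep
  rcases hs.eq_or_lt with h | h
  · subst h; simpa using huv
  · have e : v - s⁻¹ * v ^ 2 - (u - s⁻¹ * u ^ 2) = (v - u) * (s - (u + v)) / s := by
      field_simp; ring
    have : 0 ≤ (v - u) * (s - (u + v)) / s :=
      div_nonneg (mul_nonneg (by linarith) (by linarith)) h.le
    linarith

lemma step_superadd {s s' u u' : ℝ} (h0 : 0 ≤ u) (h1 : u ≤ s) (h0' : 0 ≤ u') (h1' : u' ≤ s') :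
    phiStep s u + phiStep s' u' ≤ phiStep (s + s') (u + u') := by
  unfold phiStep
  rcases (h0.trans h1).eq_or_lt with h | h
  · subst h
    obtain rfl : u = 0 := le_antisymm h1 h0
    simp
  rcases (h0'.trans h1').eq_or_lt with h' | h'
  · subst h'
    obtain rfl : u' = 0 := le_antisymm h1' h0'
    simp
  have key : (u + u') ^ 2 / (s + s') ≤ u ^ 2 / s + u' ^ 2 / s' := by
    rw [div_add_div _ _ h.ne' h'.ne', div_le_div_iff₀ (by positivity) (by positivity)]
    nlinarith [sq_nonneg (u * s' - u' * s)]
  simp only [div_eq_inv_mul] at key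
  linarith

lemma iter_bounds {s u : ℝ} (h0 : 0 ≤ u) (h1 : u ≤ s) (b : ℕ) :
    0 ≤ (phiStep s)^[b] u ∧ (phiStep s)^[b] u ≤ s := by
  induction b with
  | zero => exact ⟨h0, h1⟩
  | succ b ih =>
    rw [Function.iterate_succ_apply']
    exact ⟨step_nonneg ih.1 ih.2, (step_le_half ih.1 ih.2).trans (by linarith)⟩

lemma iter_superadd {s s' u u' : ℝ} (h0 : 0 ≤ u) (h1 : u ≤ s) (h0' : 0 ≤ u') (h1' : u' ≤ s')
    (b : ℕ) :
    (phiStep s)^[b] u + (phiStep s')^[b] u' ≤ (phiStep (s + s'))^[b] (u + u') := by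
  -- The range of `φ` lies below `s / 2`, where `φ` is increasing, but the starting point
  -- need not; the first application is therefore treated separately.
  rcases b with _ | b
  · exact le_rfl
  induction b with
  | zero => exact step_superadd h0 h1 h0' h1'
  | succ b ih =>
    obtain ⟨p, q⟩ := iter_bounds h0 h1 (b + 1)
    obtain ⟨p', q'⟩ := iter_bounds h0' h1' (b + 1)
    obtain ⟨P, Q⟩ := iter_bounds (add_nonneg h0 h0') (add_le_add h1 h1') b
    rw [Function.iterate_succ_apply' _ (b + 1), Function.iterate_succ_apply' _ (b + 1),
      Function.iterate_succ_apply' _ (b + 1)]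
    refine (step_superadd p q p' q').trans (step_mono (by linarith) ih ?_)
    rw [Function.iterate_succ_apply']
    exact step_le_half P Q

lemma iter_smul (c s u : ℝ) (b : ℕ) :
    (phiStep (c * s))^[b] (c * u) = c * (phiStep s)^[b] u := by
  have h : Function.Semiconj (fun v => c * v) (phiStep s) (phiStep (c * s)) := by
    intro v
    simp only [phiStep]
    rcases eq_or_ne c 0 with rfl | hc
    · simp
    · rw [mul_inv]; field_simp
  exact ((h.iterate_right b) u).symm

section Vector

variable {N : ℕ}

lemma diagPhi_nonneg (b : ℕ) {x : Fin N → ℝ} (hx : 0 ≤ x) : 0 ≤ diagPhi b x := fun i =>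
  (iter_bounds (hx i) (Finset.single_le_sum (fun j _ => hx j) (Finset.mem_univ i)) b).1

lemma diagPhi_superadd (b : ℕ) {x y : Fin N → ℝ} (hx : 0 ≤ x) (hy : 0 ≤ y) :
    diagPhi b x + diagPhi b y ≤ diagPhi b (x + y) := by
  intro i
  simp only [diagPhi, Pi.add_apply, Finset.sum_add_distrib]
  exact iter_superadd (hx i) (Finset.single_le_sum (fun j _ => hx j) (Finset.mem_univ i))
    (hy i) (Finset.single_le_sum (fun j _ => hy j) (Finset.mem_univ i)) b

/-- A nonnegative superadditive map on the orthant is monotone. -/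
lemma diagPhi_mono (b : ℕ) {x y : Fin N → ℝ} (hx : 0 ≤ x) (hxy : x ≤ y) :
    diagPhi b x ≤ diagPhi b y := by
  have h := diagPhi_superadd b hx (sub_nonneg.2 hxy)
  rw [add_sub_cancel] at h
  exact (le_add_of_nonneg_right (diagPhi_nonneg b (sub_nonneg.2 hxy))).trans h

lemma diagPhi_iterate_nonneg (b t : ℕ) {x : Fin N → ℝ} (hx : 0 ≤ x) :
    0 ≤ (diagPhi b)^[t] x := by
  induction t with
  | zero => exact hx
  | succ t ih => rw [Function.iterate_succ_apply']; exact diagPhi_nonneg b ih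

lemma diagPhi_iterate_superadd (b t : ℕ) {x y : Fin N → ℝ} (hx : 0 ≤ x) (hy : 0 ≤ y) :
    (diagPhi b)^[t] x + (diagPhi b)^[t] y ≤ (diagPhi b)^[t] (x + y) := by
  induction t with
  | zero => exact le_rfl
  | succ t ih =>
    have px := diagPhi_iterate_nonneg b t hx
    have py := diagPhi_iterate_nonneg b t hy
    simp only [Function.iterate_succ_apply']
    exact (diagPhi_superadd b px py).trans (diagPhi_mono b (add_nonneg px py) ih)

lemma diagPhi_iterate_sum (b t : ℕ) {ι : Type*} (S : Finset ι) (x : ι → Fin N → ℝ)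
    (hx : ∀ i, 0 ≤ x i) :
    ∑ i ∈ S, (diagPhi b)^[t] (x i) ≤ (diagPhi b)^[t] (∑ i ∈ S, x i) := by
  classical
  induction S using Finset.induction_on with
  | empty => simpa using diagPhi_iterate_nonneg b t (le_refl (0 : Fin N → ℝ))
  | insert a S ha ih =>
    rw [Finset.sum_insert ha, Finset.sum_insert ha]
    exact (add_le_add le_rfl ih).trans
      (diagPhi_iterate_superadd b t (hx a) (Finset.sum_nonneg fun i _ => hx i))

lemma diagPhi_iterate_smul_perm (b t : ℕ) (c : ℝ) (τ : Equiv.Perm (Fin N)) (x : Fin N → ℝ) :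
    (diagPhi b)^[t] (c • (x ∘ τ)) = c • ((diagPhi b)^[t] x ∘ τ) := by
  have h : Function.Semiconj (fun y : Fin N → ℝ => c • (y ∘ τ)) (diagPhi b) (diagPhi b) := by
    intro y
    ext i
    simp only [diagPhi, Pi.smul_apply, Function.comp_apply, smul_eq_mul]
    rw [← Finset.mul_sum, Equiv.sum_comp τ y, iter_smul]
  exact ((h.iterate_right t) x).symm

lemma PhiB_diagonal (b : ℕ) (x : Fin N → ℝ) :
    PhiB b (Matrix.diagonal x) = Matrix.diagonal (diagPhi b x) := by
  have h : Function.Semiconj (Matrix.diagonal : (Fin N → ℝ) → Matrix (Fin N) (Fin N) ℝ)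
      (fun y i => phiStep (∑ j, x j) (y i))
      (fun X => X - (Matrix.trace (Matrix.diagonal x))⁻¹ • X ^ 2) := by
    intro y
    beta_reduce
    rw [Matrix.trace_diagonal, Matrix.diagonal_pow, ← Matrix.diagonal_smul,
      Matrix.diagonal_sub]
    rfl
  have e : ∀ y : Fin N → ℝ, (fun (y : Fin N → ℝ) i => phiStep (∑ j, x j) (y i))^[b] y
      = fun i => (phiStep (∑ j, x j))^[b] (y i) := by
    induction b with
    | zero => intro y; rfl
    | succ b ih => intro y; rw [Function.iterate_succ_apply, ih]; rfl
  unfold PhiB diagPhi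
  rw [← (h.iterate_right b) x, e]

lemma PhiB_iterate_diagonal (b t : ℕ) (x : Fin N → ℝ) :
    (PhiB b)^[t] (Matrix.diagonal x) = Matrix.diagonal ((diagPhi b)^[t] x) := by
  have h : Function.Semiconj (Matrix.diagonal : (Fin N → ℝ) → Matrix (Fin N) (Fin N) ℝ)
      (diagPhi b) (PhiB b) := fun y => (PhiB_diagonal b y).symm
  exact ((h.iterate_right t) x).symm

end Vector

/-- Permutation averaging lemma: averaging the diagonal entries of `Λ` over a random
permutation (finitely many values, with weights `w`) can only increase the trace of the
`t`-fold iterate of `Φ_b`.  Conjugation of the diagonal matrix `Λ` by the permutation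
matrix of `σ i` is expressed as `Λ.submatrix (σ i) (σ i)`. -/
theorem PhiB_permutation_averaging {N : ℕ} (b t : ℕ) (hb : 1 ≤ b) (ht : 1 ≤ t)
    (Λ : Matrix (Fin N) (Fin N) ℝ) (hd : Λ.IsDiag) (hΛ : Λ.PosSemidef)
    (htr : 0 < Matrix.trace Λ)
    (m : ℕ) (w : Fin m → ℝ) (hw : ∀ i, 0 ≤ w i) (hw1 : ∑ i, w i = 1)
    (σ : Fin m → Equiv.Perm (Fin N)) :
    Matrix.trace ((PhiB b)^[t] Λ)
      ≤ Matrix.trace ((PhiB b)^[t] (∑ i, w i • Λ.submatrix (σ i) (σ i))) := by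
  obtain ⟨x, rfl⟩ : ∃ x, Λ = Matrix.diagonal x := ⟨Λ.diag, hd.diagonal_diag.symm⟩
  have hx : 0 ≤ x := Matrix.posSemidef_diagonal_iff.1 hΛ
  have hsum : ∑ i, w i • (Matrix.diagonal x).submatrix (σ i) (σ i)
      = Matrix.diagonal (∑ i, w i • (x ∘ σ i)) := by
    simp only [Matrix.submatrix_diagonal_equiv, ← Matrix.diagonal_smul]
    exact (map_sum (Matrix.diagonalAddMonoidHom (Fin N) ℝ) _ _).symm
  rw [hsum, PhiB_iterate_diagonal, PhiB_iterate_diagonal, Matrix.trace_diagonal,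
    Matrix.trace_diagonal]
  have key := diagPhi_iterate_sum b t Finset.univ (fun i => w i • (x ∘ σ i))
    (fun i j => mul_nonneg (hw i) (hx (σ i j)))
  simp only [diagPhi_iterate_smul_perm] at key
  calc ∑ j, (diagPhi b)^[t] x j
      = ∑ i, w i * ∑ j, (diagPhi b)^[t] x j := by rw [← Finset.sum_mul, hw1, one_mul]
    _ = ∑ j, (∑ i, w i • ((diagPhi b)^[t] x ∘ σ i)) j := by
        simp only [Finset.sum_apply, Pi.smul_apply, Function.comp_apply, smul_eq_mul]
        rw [Finset.sum_comm]
        refine Finset.sum_congr rfl fun i _ => ?_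
        rw [← Finset.mul_sum, Equiv.sum_comp (σ i) ((diagPhi b)^[t] x)]
    _ ≤ _ := Finset.sum_le_sum fun j _ => key j
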